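/- A strictly-convex spherical polygon with n edges is uniquely determined up to isometry of the sphere by all n of its interior angles together with any n−3 of its edge lengths. -/

import Mathlib

noncomputable section
open Real
open scoped RealInnerProductSpace

/-- Euclidean 3-space; the unit sphere in it is the 2-sphere `S²`. -/
abbrev E3 : Type := EuclideanSpace ℝ (Fin 3)

/-- The determinant (triple product) of three vectors in `ℝ³`.  For unit
vectors `p, x, q`, the condition `0 < det3 p x q` says that `q` lies strictly
on the left of the oriented great circle through `p` and `x`; at a vertex `x`
of a spherical polygon with neighbours `p, q` this is equivalent to the
interior angle at `x` (measured on the left side) being strictly less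
than `π`. -/
def det3 (u v w : E3) : ℝ :=
  u 0 * (v 1 * w 2 - v 2 * w 1) - u 1 * (v 0 * w 2 - v 2 * w 0) +
    u 2 * (v 0 * w 1 - v 1 * w 0)

/-- The (short) geodesic arc on the unit sphere joining two unit vectors
`v` and `w`: the radial projection of the segment between them. -/
def arcSeg (v w : E3) : Set E3 :=
  {x | ∃ a b : ℝ, 0 ≤ a ∧ 0 ≤ b ∧ 0 < a + b ∧
    x = ‖a • v + b • w‖⁻¹ • (a • v + b • w)}

/-- The spherical (great-circle) distance between two unit vectors. -/
def sdist (v w : E3) : ℝ := Real.arccos ⟪v, w⟫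

/-- The spherical angle at `x` between the geodesics from `x` toward `p` and
from `x` toward `q`: the angle between the tangent directions, valued
in `[0, π]`. -/
def sangle (p x q : E3) : ℝ :=
  InnerProductGeometry.angle (p - ⟪p, x⟫ • x) (q - ⟪q, x⟫ • x)

/-- A strictly-convex spherical polygon: unit vertices, interior angles
(measured on the left) strictly less than `π`, no self-intersections, and
contained in the interior of a hemisphere. -/
def StrictlyConvexSphPolygon (m : ℕ) (v : Fin (m + 3) → E3) : Prop :=
  (∀ i, ‖v i‖ = 1) ∧
  (∀ i : Fin (m + 3), 0 < det3 (v (i - 1)) (v i) (v (i + 1))) ∧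
  (∀ i : Fin (m + 3),
    arcSeg (v i) (v (i + 1)) ∩ arcSeg (v (i + 1)) (v (i + 2)) = {v (i + 1)}) ∧
  (∀ i j : Fin (m + 3), j ≠ i → j ≠ i + 1 → i ≠ j + 1 →
    Disjoint (arcSeg (v i) (v (i + 1))) (arcSeg (v j) (v (j + 1)))) ∧
  (∃ u : E3, ‖u‖ = 1 ∧
    ∀ i : Fin (m + 3), ∀ x ∈ arcSeg (v i) (v (i + 1)), 0 < ⟪x, u⟫)

/-! By polar duality the interior angle at a vertex is supplementary to the angle between the
normals of its two edges. The three edges of unknown length cut the cyclic sequence of normals into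
three chains; the angles and the known lengths let each chain be built up by successive turns, so
each is rigid. Hence the three normals at the ends of the chains have known pairwise inner products.
Convexity makes them positively oriented, so they, and with them all the chains, are determined up
to a rotation. The vertices are then recovered as the intersections of consecutive edges.

Convexity is not part of the definition, which only demands left turns and disjoint arcs. Follow the
boundary starting from the vertex closest to the equator of the hemisphere: if it ever failed to
stay to the left of all earlier edges, then at the first failure it would cross an earlier edge
within its arc. -/

open InnerProductGeometry NormedSpace Matrix

/-! ### Triple products -/

/-- The cross product of `ℝ³`, carried over to `E3`. -/
def cross (x y : E3) : E3 := WithLp.toLp 2 (x.ofLp ⨯₃ y.ofLp)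

lemma cross_apply_zero (x y : E3) : cross x y 0 = x 1 * y 2 - x 2 * y 1 := by
  simp [cross, cross_apply]

lemma cross_apply_one (x y : E3) : cross x y 1 = x 2 * y 0 - x 0 * y 2 := by
  simp [cross, cross_apply]

lemma cross_apply_two (x y : E3) : cross x y 2 = x 0 * y 1 - x 1 * y 0 := by
  simp [cross, cross_apply]

lemma inner_eq_sum (x y : E3) : ⟪x, y⟫ = x 0 * y 0 + x 1 * y 1 + x 2 * y 2 := by
  simp [PiLp.inner_apply, Fin.sum_univ_three, mul_comm]

lemma inner_cross_cross (a b c d : E3) :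
    ⟪cross a b, cross c d⟫ = ⟪a, c⟫ * ⟪b, d⟫ - ⟪a, d⟫ * ⟪b, c⟫ := by
  simp only [inner_eq_sum, cross_apply_zero, cross_apply_one, cross_apply_two]
  ring

lemma cross_swap (a b : E3) : cross b a = -cross a b := by
  rw [cross, cross, ← cross_anticomm, WithLp.toLp_neg]

lemma inner_cross_left (a b c : E3) : ⟪cross a b, c⟫ = det3 a b c := by
  simp only [inner_eq_sum, det3, cross_apply_zero, cross_apply_one, cross_apply_two]
  ring

lemma inner_cross_right (a b c : E3) : ⟪c, cross a b⟫ = det3 a b c := by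
  rw [real_inner_comm, inner_cross_left]

lemma det3_rotate (a b c : E3) : det3 a b c = det3 b c a := by
  simp only [det3]
  ring

lemma det3_self_left (a b : E3) : det3 a a b = 0 := by
  simp only [det3]
  ring

lemma det3_self_right (a b : E3) : det3 a b b = 0 := by
  rw [det3_rotate, det3_self_left]

lemma det3_self_outer (a b : E3) : det3 a b a = 0 := by
  rw [← det3_rotate, det3_self_left]

lemma det3_add_smul (a b x y : E3) (s t : ℝ) :
    det3 a b (s • x + t • y) = s * det3 a b x + t * det3 a b y := by
  simp only [← inner_cross_left, inner_add_right, real_inner_smul_right]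

lemma det3_smul_smul_smul (a b c : E3) (r s t : ℝ) :
    det3 (r • a) (s • b) (t • c) = r * s * t * det3 a b c := by
  simp only [det3, PiLp.smul_apply, smul_eq_mul]
  ring

lemma det3_normalize_pos {a b c : E3} (h : 0 < det3 a b c) :
    0 < det3 (normalize a) (normalize b) (normalize c) := by
  have ha : a ≠ 0 := by rintro rfl; simp [det3] at h
  have hb : b ≠ 0 := by rintro rfl; simp [det3] at h
  have hc : c ≠ 0 := by rintro rfl; simp [det3] at h
  rw [NormedSpace.normalize, NormedSpace.normalize, NormedSpace.normalize, det3_smul_smul_smul]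
  positivity

lemma cross_ne_zero_of_det3_pos {a b c : E3} (h : 0 < det3 a b c) : cross a b ≠ 0 := by
  intro h0
  rw [← inner_cross_left, h0, inner_zero_left] at h
  exact h.false

lemma det3_eq_basis_det (a b c : E3) :
    det3 a b c = (EuclideanSpace.basisFun (Fin 3) ℝ).toBasis.det ![a, b, c] := by
  rw [Module.Basis.det_apply, Matrix.det_fin_three, det3]
  simp only [Module.Basis.toMatrix_apply, OrthonormalBasis.coe_toBasis_repr_apply,
    EuclideanSpace.basisFun_repr, cons_val]
  ring

lemma det3_map (f : E3 →ₗ[ℝ] E3) (a b c : E3) :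
    det3 (f a) (f b) (f c) = LinearMap.det f * det3 a b c := by
  rw [det3_eq_basis_det, det3_eq_basis_det, ← Module.Basis.det_comp]
  congr 1
  ext i
  fin_cases i <;> rfl

lemma det3_cramer (a b c x : E3) :
    det3 a b c • x = det3 x b c • a + det3 a x c • b + det3 a b x • c := by
  ext i
  fin_cases i <;>
    simp only [det3, Fin.zero_eta, Fin.mk_one, Fin.reduceFinMk, PiLp.add_apply, PiLp.smul_apply,
      smul_eq_mul] <;>
    ring

lemma det3_smul_eq_reciprocal (a b c x : E3) :
    det3 a b c • x = ⟪a, x⟫ • cross b c + ⟪b, x⟫ • cross c a + ⟪c, x⟫ • cross a b := by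
  ext i
  fin_cases i <;>
    simp only [det3, inner_eq_sum, Fin.zero_eta, Fin.mk_one, Fin.reduceFinMk, PiLp.add_apply,
      PiLp.smul_apply, smul_eq_mul, cross_apply_zero, cross_apply_one, cross_apply_two] <;>
    ring

lemma inner_mul_det3_eq (p a b c y : E3) :
    ⟪p, y⟫ * det3 a b c =
      ⟪a, y⟫ * det3 p b c - ⟪b, y⟫ * det3 p a c + ⟪c, y⟫ * det3 p a b := by
  simp only [det3, inner_eq_sum]
  ring

lemma det3_mul_det3_cross (a b c d e f : E3) :
    det3 a c e * det3 (cross a b) (cross c d) (cross e f) =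
      det3 a c d * det3 c e f * det3 a b e + det3 a e f * det3 c d e * det3 a b c := by
  simp only [det3, cross_apply_zero, cross_apply_one, cross_apply_two]
  ring

lemma exists_eq_smul_add_smul {a b c x : E3} (habc : det3 a b c ≠ 0) (hx : det3 a b x = 0) :
    ∃ α β : ℝ, x = α • a + β • b := by
  have cramer := det3_cramer a b c x
  rw [hx, zero_smul, add_zero, ← eq_inv_smul_iff₀ habc, smul_add, smul_smul, smul_smul] at cramer
  exact ⟨_, _, cramer⟩

lemma det3_pos_trans {p a b c y : E3} (hp : ⟪p, y⟫ = 0) (ha : 0 < ⟪a, y⟫) (hb : 0 < ⟪b, y⟫)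
    (hc : 0 < ⟪c, y⟫) (hab : 0 < det3 p a b) (hbc : 0 < det3 p b c) : 0 < det3 p a c := by
  have hrel := inner_mul_det3_eq p a b c y
  rw [hp, zero_mul] at hrel
  refine pos_of_mul_pos_right (a := ⟪b, y⟫) ?_ hb.le
  linarith [mul_pos ha hbc, mul_pos hc hab]

lemma det3_sq_eq_gram (p q x : E3) :
    det3 p q x ^ 2 = ⟪p, p⟫ * (⟪q, q⟫ * ⟪x, x⟫ - ⟪q, x⟫ ^ 2)
      - ⟪p, q⟫ * (⟪p, q⟫ * ⟪x, x⟫ - ⟪q, x⟫ * ⟪p, x⟫)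
      + ⟪p, x⟫ * (⟪p, q⟫ * ⟪q, x⟫ - ⟪q, q⟫ * ⟪p, x⟫) := by
  simp only [inner_eq_sum, det3]
  ring

lemma eq_of_inner_eq_of_det3_pos {p q x y : E3} (hx : 0 < det3 p q x) (hy : 0 < det3 p q y)
    (hp : ⟪p, x⟫ = ⟪p, y⟫) (hq : ⟪q, x⟫ = ⟪q, y⟫) (hxy : ‖x‖ = ‖y‖) : x = y := by
  have hdet : det3 p q x = det3 p q y := by
    rw [← sq_eq_sq₀ hx.le hy.le, det3_sq_eq_gram, det3_sq_eq_gram, hp, hq,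
      real_inner_self_eq_norm_sq x, hxy, real_inner_self_eq_norm_sq y]
  have hpq : det3 p q (cross p q) ≠ 0 := by
    rw [← inner_cross_left]
    exact inner_self_ne_zero.mpr (cross_ne_zero_of_det3_pos hx)
  apply smul_right_injective E3 hpq
  simp only [det3_smul_eq_reciprocal, inner_cross_left, hp, hq, hdet]

/-! ### Rotations -/

lemma exists_orthonormalBasis_det3_eq_one {p q : E3} (hp : ‖p‖ = 1) (hq : ‖q‖ = 1)
    (hpq : ⟪p, q⟫ = 0) :
    ∃ b : OrthonormalBasis (Fin 3) ℝ E3, b 0 = p ∧ b 1 = q ∧ det3 (b 0) (b 1) (b 2) = 1 := by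
  have hcc : ⟪cross p q, cross p q⟫ = 1 := by
    rw [inner_cross_cross, hpq, real_inner_self_eq_norm_sq, real_inner_self_eq_norm_sq, hp, hq]
    norm_num
  have hc : ‖cross p q‖ = 1 := by
    rwa [real_inner_self_eq_norm_sq, pow_eq_one_iff_of_nonneg (norm_nonneg _) two_ne_zero] at hcc
  have horth : Orthonormal ℝ ![p, q, cross p q] := by
    rw [orthonormal_iff_ite]
    intro i j
    fin_cases i <;> fin_cases j <;>
      simp [hp, hq, hpq, hc, real_inner_comm p q, inner_cross_left, inner_cross_right,
        det3_self_outer, det3_self_right]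
  have hbasis := coe_basisOfOrthonormalOfCardEqFinrank horth (by simp)
  refine ⟨(basisOfOrthonormalOfCardEqFinrank horth (by simp)).toOrthonormalBasis
    (by rwa [hbasis]), ?_, ?_, ?_⟩ <;> simp [← inner_cross_left, hc]

lemma exists_rotation_map_eq {p q p' q' : E3} (hp : ‖p‖ = 1) (hq : ‖q‖ = 1) (hpq : ⟪p, q⟫ = 0)
    (hp' : ‖p'‖ = 1) (hq' : ‖q'‖ = 1) (hpq' : ⟪p', q'⟫ = 0) :
    ∃ R : E3 ≃ₗᵢ[ℝ] E3,
      LinearMap.det (R.toLinearEquiv : E3 →ₗ[ℝ] E3) = 1 ∧ R p = p' ∧ R q = q' := by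
  obtain ⟨b, rfl, rfl, hb⟩ := exists_orthonormalBasis_det3_eq_one hp hq hpq
  obtain ⟨b', rfl, rfl, hb'⟩ := exists_orthonormalBasis_det3_eq_one hp' hq' hpq'
  refine ⟨b.equiv b' (Equiv.refl _), ?_, by simp, by simp⟩
  have hdet := det3_map ((b.equiv b' (Equiv.refl _)).toLinearEquiv : E3 →ₗ[ℝ] E3) (b 0) (b 1) (b 2)
  rw [hb, mul_one] at hdet
  rw [← hdet]
  simpa using hb'

lemma rotation_map_eq {R : E3 ≃ₗᵢ[ℝ] E3}
    (hR : LinearMap.det (R.toLinearEquiv : E3 →ₗ[ℝ] E3) = 1) {p q x p' q' x' : E3}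
    (hp : R p = p') (hq : R q = q') (hx : 0 < det3 p q x) (hx' : 0 < det3 p' q' x')
    (hpx : ⟪p, x⟫ = ⟪p', x'⟫) (hqx : ⟪q, x⟫ = ⟪q', x'⟫) (hnorm : ‖x‖ = ‖x'‖) : R x = x' := by
  subst hp hq
  have hdet : det3 (R p) (R q) (R x) = det3 p q x := by
    simpa [hR] using det3_map (R.toLinearEquiv : E3 →ₗ[ℝ] E3) p q x
  refine eq_of_inner_eq_of_det3_pos (hdet ▸ hx) hx' ?_ ?_ ?_
  · rw [R.inner_map_map, hpx]
  · rw [R.inner_map_map, hqx]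
  · rw [R.norm_map, hnorm]

/-! ### Angles and arcs -/

lemma cross_cross_self {x : E3} (hx : ‖x‖ = 1) (p : E3) :
    cross x (cross p x) = p - ⟪p, x⟫ • x := by
  have hxx : x 0 * x 0 + x 1 * x 1 + x 2 * x 2 = 1 := by
    rw [← inner_eq_sum, real_inner_self_eq_norm_sq, hx, one_pow]
  ext i
  fin_cases i <;> simp only [inner_eq_sum, Fin.zero_eta, Fin.mk_one, Fin.reduceFinMk,
    PiLp.sub_apply, PiLp.smul_apply, smul_eq_mul, cross_apply_zero, cross_apply_one,
    cross_apply_two]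
  · linear_combination p 0 * hxx
  · linear_combination p 1 * hxx
  · linear_combination p 2 * hxx

lemma angle_cross_cross {x a b : E3} (hx : ‖x‖ = 1) (ha : ⟪x, a⟫ = 0) (hb : ⟪x, b⟫ = 0) :
    angle (cross x a) (cross x b) = angle a b := by
  have hnorm (c : E3) (hc : ⟪x, c⟫ = 0) : ‖cross x c‖ = ‖c‖ := by
    rw [← sq_eq_sq₀ (norm_nonneg _) (norm_nonneg _), ← real_inner_self_eq_norm_sq,
      inner_cross_cross, hc, real_inner_self_eq_norm_sq, hx, real_inner_self_eq_norm_sq]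
    ring
  have hinner : ⟪cross x a, cross x b⟫ = ⟪a, b⟫ := by
    simp [inner_cross_cross, hx, hb]
  rw [angle, angle, hinner, hnorm a ha, hnorm b hb]

lemma sangle_eq_pi_sub_angle_cross {x : E3} (hx : ‖x‖ = 1) (p q : E3) :
    sangle p x q = π - angle (cross p x) (cross x q) := by
  have horth (a : E3) : ⟪x, cross a x⟫ = 0 := by rw [inner_cross_right, det3_self_right]
  rw [sangle, ← cross_cross_self hx, ← cross_cross_self hx,
    angle_cross_cross hx (horth p) (horth q), cross_swap x q, angle_neg_right]

lemma inner_eq_cos_sdist {x y : E3} (hx : ‖x‖ = 1) (hy : ‖y‖ = 1) : ⟪x, y⟫ = cos (sdist x y) := by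
  rw [inner_eq_cos_angle_of_norm_eq_one hx hy, sdist, angle, hx, hy, mul_one, div_one]

lemma normalize_smul_add_smul_mem_arcSeg {a b : E3} {α β : ℝ} (hα : 0 ≤ α) (hβ : 0 ≤ β)
    (h : α • a + β • b ≠ 0) : normalize (α • a + β • b) ∈ arcSeg a b := by
  refine ⟨α, β, hα, hβ, (add_nonneg hα hβ).lt_of_ne' fun h0 => h ?_, rfl⟩
  obtain ⟨rfl, rfl⟩ := (add_eq_zero_iff_of_nonneg hα hβ).mp h0
  simp

lemma left_mem_arcSeg {a : E3} (ha : ‖a‖ = 1) (b : E3) : a ∈ arcSeg a b := by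
  have ha0 : a ≠ 0 := by rintro rfl; simp at ha
  simpa [normalize_eq_self_of_norm_eq_one ha, ha0] using
    normalize_smul_add_smul_mem_arcSeg (a := a) (b := b) zero_le_one le_rfl

/-- The half-space of `y` bounds the arc at `a`, the plane through `b` and `c` bounds it at `b`. -/
lemma normalize_mem_arcSeg_of_det3_eq_zero {a b c x y : E3} (habc : 0 < det3 a b c) (hx : x ≠ 0)
    (habx : det3 a b x = 0) (hbcx : 0 ≤ det3 b c x) (hay : ⟪a, y⟫ = 0) (hby : 0 < ⟪b, y⟫)
    (hxy : 0 ≤ ⟪x, y⟫) : normalize x ∈ arcSeg a b := by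
  obtain ⟨α, β, rfl⟩ := exists_eq_smul_add_smul habc.ne' habx
  rw [det3_add_smul, det3_self_outer, mul_zero, add_zero, ← det3_rotate] at hbcx
  rw [inner_add_left, real_inner_smul_left, real_inner_smul_left, hay, mul_zero, zero_add] at hxy
  exact normalize_smul_add_smul_mem_arcSeg (nonneg_of_mul_nonneg_left hbcx habc)
    (nonneg_of_mul_nonneg_left hxy hby) hx

/-! ### Convexity -/

lemma exists_first_zero {ι : Type*} {J : Finset ι} {p q : ι → ℝ} (hp : ∀ i ∈ J, 0 < p i)
    (hq : ∃ i ∈ J, q i ≤ 0) :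
    ∃ s ∈ Set.Ioc (0 : ℝ) 1, (∀ i ∈ J, 0 ≤ (1 - s) * p i + s * q i) ∧
      ∃ i ∈ J, (1 - s) * p i + s * q i = 0 := by
  obtain ⟨i, hi, hmin⟩ := (J.filter (q · ≤ 0)).exists_min_image (fun i => p i / (p i - q i))
    (by simpa [Finset.Nonempty, Finset.mem_filter] using hq)
  obtain ⟨hiJ, hqi⟩ := Finset.mem_filter.mp hi
  have hpi := hp i hiJ
  have hden : 0 < p i - q i := by linarith
  have hs0 : 0 < p i / (p i - q i) := div_pos hpi hden
  have hs1 : p i / (p i - q i) ≤ 1 := (div_le_one hden).mpr (by linarith)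
  refine ⟨p i / (p i - q i), ⟨hs0, hs1⟩, fun j hj => ?_, i, hiJ, by field_simp; ring⟩
  have hpj := hp j hj
  rcases lt_or_ge 0 (q j) with hqj | hqj
  · exact add_nonneg (mul_nonneg (sub_nonneg.mpr hs1) hpj.le) (mul_pos hs0 hqj).le
  · have hle := hmin j (Finset.mem_filter.mpr ⟨hj, hqj⟩)
    rw [le_div_iff₀ (by linarith)] at hle
    linarith

/-- A sequence of unit vectors, the vertices of a path of arcs turning left at every vertex. -/
structure IsLeftTurning (V : ℕ → E3) : Prop where
  norm_eq_one (t : ℕ) : ‖V t‖ = 1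
  det3_pos (t : ℕ) : 0 < det3 (V t) (V (t + 1)) (V (t + 2))

/-- The vertices of a strictly convex spherical polygon with `n` edges, as an `n`-periodic sequence:
the cyclic order of vertices becomes the order of `ℕ` on any `n` consecutive indices. -/
structure IsConvexCycle (n : ℕ) (V : ℕ → E3) : Prop extends IsLeftTurning V where
  periodic : Function.Periodic V n
  disjoint_arcSeg {i j : ℕ} (hij : i + 2 ≤ j) (hji : j + 2 ≤ i + n) :
    Disjoint (arcSeg (V i) (V (i + 1))) (arcSeg (V j) (V (j + 1)))
  exists_inner_pos : ∃ u : E3, ∀ t, 0 < ⟪V t, u⟫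

namespace IsConvexCycle

variable {n : ℕ} {V : ℕ → E3}

lemma shift (h : IsConvexCycle n V) (k : ℕ) : IsConvexCycle n fun t => V (k + t) where
  norm_eq_one t := h.norm_eq_one _
  det3_pos t := h.det3_pos _
  periodic := h.periodic.const_add k
  disjoint_arcSeg hij hji := h.disjoint_arcSeg (by omega) (by omega)
  exists_inner_pos := h.exists_inner_pos.imp fun _ hu _ => hu _

lemma apply_period (h : IsConvexCycle n V) : V n = V 0 := by
  simpa using h.periodic 0

lemma apply_ne_apply_zero (h : IsConvexCycle n V) {t : ℕ} (ht : 0 < t) (htn : t < n) :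
    V t ≠ V 0 := by
  intro heq
  obtain rfl | ht2 : t = 1 ∨ 2 ≤ t := by omega
  · have := h.det3_pos 0
    rw [heq, det3_self_left] at this
    exact this.false
  obtain hlast | htn2 : t + 1 = n ∨ t + 2 ≤ n := by omega
  · have := h.det3_pos t
    rw [show t + 2 = n + 1 by omega, hlast, h.apply_period, heq, det3_self_left] at this
    exact this.false
  · have hdisj := h.disjoint_arcSeg (i := 0) (j := t) (by omega) (by omega)
    exact Set.disjoint_left.mp hdisj (left_mem_arcSeg (h.norm_eq_one 0) _)
      (heq ▸ left_mem_arcSeg (h.norm_eq_one t) _)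

lemma exists_support (h : IsConvexCycle n V) {u : E3} (hu : 0 < ⟪V 0, u⟫)
    (hmin : ∀ t < n, ⟪V 0, u⟫ ≤ ⟪V t, u⟫) :
    ∃ z, ⟪V 0, z⟫ = 0 ∧ ∀ t, 0 < t → t < n → 0 < ⟪V t, z⟫ := by
  refine ⟨u - ⟪V 0, u⟫ • V 0, ?_, fun t ht htn => ?_⟩
  · rw [inner_sub_right, real_inner_smul_right, real_inner_self_eq_norm_sq, h.norm_eq_one]
    ring
  · have hlt : ⟪V t, V 0⟫ < 1 := (inner_lt_one_iff_real_of_norm_eq_one (h.norm_eq_one t)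
      (h.norm_eq_one 0)).mpr (h.apply_ne_apply_zero ht htn)
    rw [inner_sub_right, real_inner_smul_right, sub_pos]
    exact (mul_lt_of_lt_one_right hu hlt).trans_le (hmin t htn)

section Support

variable {z : E3} {i j k : ℕ}

/-- `x` lies on the chord from `V k` to `V (k + 1)` and meets the `i`-th great circle without having
left the polygon; it is squeezed between the two vertices of the `i`-th arc by the great circles of
the edges before and after. -/
lemma normalize_mem_arcSeg_of_det3_nonneg (h : IsConvexCycle n V) (hz0 : ⟪V 0, z⟫ = 0)
    (hz : ∀ t, 0 < t → t < n → 0 < ⟪V t, z⟫) (hik : i + 2 ≤ k) (hki : k + 1 < i + n)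
    (hleft : ∀ j, j + 2 ≤ k → k < j + n → 0 < det3 (V j) (V (j + 1)) (V k)) {x : E3} {s : ℝ}
    (hs0 : 0 ≤ s) (hs1 : 0 ≤ 1 - s) (hx : x = (1 - s) • V k + s • V (k + 1)) (hx0 : x ≠ 0)
    (hzero : det3 (V i) (V (i + 1)) x = 0)
    (hnonneg : ∀ j, j + 2 ≤ k → k + 1 < j + n → 0 ≤ det3 (V j) (V (j + 1)) x) :
    normalize x ∈ arcSeg (V i) (V (i + 1)) := by
  have hnext : 0 ≤ det3 (V (i + 1)) (V (i + 2)) x := by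
    obtain rfl | hik' : i + 2 = k ∨ i + 3 ≤ k := by omega
    · rw [hx, det3_add_smul, det3_self_right, mul_zero, zero_add]
      exact mul_nonneg hs0 (h.det3_pos (i + 1)).le
    · exact hnonneg (i + 1) (by omega) (by omega)
  cases i with
  | zero =>
    refine normalize_mem_arcSeg_of_det3_eq_zero (h.det3_pos 0) hx0 hzero hnext hz0
      (hz 1 (by omega) (by omega)) ?_
    rw [hx, inner_add_left, real_inner_smul_left, real_inner_smul_left]
    exact add_nonneg (mul_nonneg hs1 (hz k (by omega) (by omega)).le)
      (mul_nonneg hs0 (hz (k + 1) (by omega) (by omega)).le)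
  | succ i =>
    refine normalize_mem_arcSeg_of_det3_eq_zero (y := cross (V i) (V (i + 1)))
      (h.det3_pos (i + 1)) hx0 hzero hnext ?_ ?_ ?_ <;> rw [inner_cross_right]
    · exact det3_self_right _ _
    · exact h.det3_pos i
    · obtain hki' | hki' : k + 1 < i + n ∨ k + 1 = i + n := by omega
      · exact hnonneg i (by omega) hki'
      · rw [hx, hki', h.periodic, det3_add_smul, det3_self_outer, mul_zero, add_zero]
        exact mul_nonneg hs1 (hleft i (by omega) (by omega)).le

lemma det3_edge_pos (h : IsConvexCycle n V) (hz0 : ⟪V 0, z⟫ = 0)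
    (hz : ∀ t, 0 < t → t < n → 0 < ⟪V t, z⟫) (hjk : j + 2 ≤ k) (hkj : k < j + n) :
    0 < det3 (V j) (V (j + 1)) (V k) := by
  induction k generalizing j with
  | zero => omega
  | succ k ih =>
    have hleft (j : ℕ) (hjk : j + 2 ≤ k) (hkj : k < j + n) : 0 < det3 (V j) (V (j + 1)) (V k) :=
      ih hjk hkj
    obtain rfl | hjk' : j + 1 = k ∨ j + 2 ≤ k := by omega
    · exact h.det3_pos j
    by_contra! hneg
    obtain ⟨u, hu⟩ := h.exists_inner_pos
    have hmem (i : ℕ) : i ∈ (Finset.range k).filter (fun i => i + 2 ≤ k ∧ k + 1 < i + n) ↔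
        i + 2 ≤ k ∧ k + 1 < i + n := by
      simp only [Finset.mem_filter, Finset.mem_range]
      omega
    obtain ⟨s, ⟨hs0, hs1⟩, hnonneg, i, hi, hzero⟩ := exists_first_zero
      (p := fun i => det3 (V i) (V (i + 1)) (V k))
      (q := fun i => det3 (V i) (V (i + 1)) (V (k + 1)))
      (fun i hi => hleft i ((hmem i).mp hi).1 (by have := (hmem i).mp hi; omega))
      ⟨j, (hmem j).mpr ⟨hjk', hkj⟩, hneg⟩
    simp only [hmem, ← det3_add_smul] at hnonneg hi hzero
    rw [← sub_nonneg] at hs1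
    have hx0 : (1 - s) • V k + s • V (k + 1) ≠ 0 := by
      intro hx
      have hpos : 0 < ⟪(1 - s) • V k + s • V (k + 1), u⟫ := by
        rw [inner_add_left, real_inner_smul_left, real_inner_smul_left]
        exact add_pos_of_nonneg_of_pos (mul_nonneg hs1 (hu k).le) (mul_pos hs0 (hu (k + 1)))
      rw [hx, inner_zero_left] at hpos
      exact hpos.false
    exact Set.disjoint_left.mp (h.disjoint_arcSeg hi.1 (by omega))
      (h.normalize_mem_arcSeg_of_det3_nonneg hz0 hz hi.1 hi.2 hleft hs0.le hs1 rfl hx0 hzero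
        fun j hj hj' => hnonneg j ⟨hj, hj'⟩)
      (normalize_smul_add_smul_mem_arcSeg hs1 hs0.le hx0)

end Support

end IsConvexCycle

lemma det3_pos_of_det3_succ_pos {V : ℕ → E3} {p y : E3} {i j : ℕ} (hij : i < j) (hp : ⟪p, y⟫ = 0)
    (hy : ∀ t, i ≤ t → t ≤ j → 0 < ⟪V t, y⟫)
    (hdet : ∀ t, i ≤ t → t < j → 0 < det3 p (V t) (V (t + 1))) : 0 < det3 p (V i) (V j) := by
  induction j, hij using Nat.le_induction with
  | base => exact hdet i le_rfl (by omega)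
  | succ j hij ih =>
    exact det3_pos_trans hp (hy i le_rfl (by omega)) (hy j (by omega) (by omega))
      (hy (j + 1) (by omega) le_rfl) (ih (fun t ht htj => hy t ht (by omega))
        fun t ht htj => hdet t ht (by omega)) (hdet j (by omega) (by omega))

namespace IsConvexCycle

variable {n : ℕ} {V : ℕ → E3}

lemma det3_pos_of_support (h : IsConvexCycle n V) {z : E3} (hz0 : ⟪V 0, z⟫ = 0)
    (hz : ∀ t, 0 < t → t < n → 0 < ⟪V t, z⟫) {i j k : ℕ} (hij : i < j) (hjk : j < k) (hk : k < n) :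
    0 < det3 (V i) (V j) (V k) := by
  have hzero {i j : ℕ} (hi : 0 < i) (hij : i < j) (hj : j < n) : 0 < det3 (V 0) (V i) (V j) := by
    refine det3_pos_of_det3_succ_pos hij hz0 (fun t _ _ => hz t (by omega) (by omega))
      fun t _ _ => ?_
    rw [det3_rotate, ← h.apply_period]
    exact h.det3_edge_pos hz0 hz (by omega) (by omega)
  obtain rfl | hi := i.eq_zero_or_pos
  · exact hzero hij hjk hk
  rw [← det3_rotate]
  refine det3_pos_of_det3_succ_pos hij (y := cross (V k) (V 0)) ?_ (fun t _ _ => ?_)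
    fun t _ _ => ?_
  · rw [inner_cross_right, det3_self_outer]
  · rw [inner_cross_right, det3_rotate]
    exact hzero (by omega) (by omega) hk
  · rw [det3_rotate]
    exact h.det3_edge_pos hz0 hz (by omega) (by omega)

lemma det3_pos_of_lt (h : IsConvexCycle n V) {a b c : ℕ} (hab : a < b) (hbc : b < c)
    (hca : c < a + n) : 0 < det3 (V a) (V b) (V c) := by
  obtain ⟨u, hu⟩ := h.exists_inner_pos
  obtain ⟨k, hk, hmin⟩ := (Finset.Ico a (a + n)).exists_min_image (fun t => ⟪V t, u⟫)
    ⟨a, Finset.mem_Ico.mpr (by omega)⟩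
  simp only [Finset.mem_Ico] at hk hmin
  have hminimal (t : ℕ) (ht : t < n) : ⟪V (k + 0), u⟫ ≤ ⟪V (k + t), u⟫ := by
    rcases lt_or_ge (k + t) (a + n) with hlt | hge
    · exact hmin _ (by omega)
    · rw [show k + t = (k + t - n) + n by omega, h.periodic]
      exact hmin _ (by omega)
  obtain ⟨z, hz0, hz⟩ := (h.shift k).exists_support (hu _) hminimal
  have hwindow {i j l : ℕ} (hki : k ≤ i) (hij : i < j) (hjl : j < l) (hl : l < k + n) :
      0 < det3 (V i) (V j) (V l) := by
    have := (h.shift k).det3_pos_of_support hz0 hz (i := i - k) (j := j - k) (k := l - k)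
      (by omega) (by omega) (by omega)
    rwa [Nat.add_sub_cancel' hki, Nat.add_sub_cancel' (by omega),
      Nat.add_sub_cancel' (by omega)] at this
  obtain hka | hka := le_or_gt k a
  · exact hwindow hka hab hbc (by omega)
  obtain hkb | hkb := le_or_gt k b
  · rw [det3_rotate, ← h.periodic a]
    exact hwindow hkb hbc (by omega) (by omega)
  obtain hkc | hkc := le_or_gt k c
  · rw [← det3_rotate, ← h.periodic a, ← h.periodic b]
    exact hwindow hkc (by omega) (by omega) (by omega)
  · rw [← h.periodic a, ← h.periodic b, ← h.periodic c]
    exact hwindow (by omega) (by omega) (by omega) (by omega)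

lemma det3_edge_nonneg (h : IsConvexCycle n V) {a b : ℕ} (hab : a ≤ b) (hba : b ≤ a + n) :
    0 ≤ det3 (V a) (V (a + 1)) (V b) := by
  obtain rfl | rfl | rfl | ⟨hab', hba'⟩ :
      b = a ∨ b = a + 1 ∨ b = a + n ∨ a + 1 < b ∧ b < a + n := by omega
  · rw [det3_self_outer]
  · rw [det3_self_right]
  · rw [h.periodic, det3_self_outer]
  · exact (h.det3_pos_of_lt a.lt_succ_self hab' hba').le

lemma det3_cross_pos (h : IsConvexCycle n V) {a b c : ℕ} (hab : a < b) (hbc : b < c)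
    (hca : c < a + n) :
    0 < det3 (cross (V a) (V (a + 1))) (cross (V b) (V (b + 1))) (cross (V c) (V (c + 1))) := by
  have habc := h.det3_pos_of_lt hab hbc hca
  refine pos_of_mul_pos_right (a := det3 (V a) (V b) (V c)) ?_ habc.le
  rw [det3_mul_det3_cross]
  have habb := h.det3_pos_of_lt hab b.lt_succ_self (by omega)
  have hbcc := h.det3_pos_of_lt hbc c.lt_succ_self (by omega)
  have haac := h.det3_pos_of_lt a.lt_succ_self (by omega : a + 1 < c) hca
  have hacc : 0 ≤ det3 (V a) (V c) (V (c + 1)) := by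
    rw [det3_rotate, ← h.periodic a]
    exact h.det3_edge_nonneg (by omega) (by omega)
  have hbbc := h.det3_edge_nonneg hbc.le (by omega)
  have haab := h.det3_edge_nonneg hab.le (by omega)
  positivity

end IsConvexCycle

/-! ### Edge normals -/

/-- The unit normal of the plane through `V t` and `V (t + 1)`, pointing to the left of the `t`-th
edge: the vertices of the polar polygon. -/
def edgeNormal (V : ℕ → E3) (t : ℕ) : E3 := normalize (cross (V t) (V (t + 1)))

lemma inner_edgeNormal_left (V : ℕ → E3) (t : ℕ) : ⟪edgeNormal V t, V t⟫ = 0 := by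
  rw [edgeNormal, NormedSpace.normalize, real_inner_smul_left, inner_cross_left, det3_self_outer,
    mul_zero]

lemma inner_edgeNormal_right (V : ℕ → E3) (t : ℕ) : ⟪edgeNormal V t, V (t + 1)⟫ = 0 := by
  rw [edgeNormal, NormedSpace.normalize, real_inner_smul_left, inner_cross_left, det3_self_right,
    mul_zero]

namespace IsLeftTurning

variable {V W : ℕ → E3}

lemma cross_ne_zero (h : IsLeftTurning V) (t : ℕ) : cross (V t) (V (t + 1)) ≠ 0 :=
  cross_ne_zero_of_det3_pos (h.det3_pos t)

lemma norm_edgeNormal (h : IsLeftTurning V) (t : ℕ) : ‖edgeNormal V t‖ = 1 :=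
  norm_normalize (h.cross_ne_zero t)

lemma det3_edgeNormal_edge_pos (h : IsLeftTurning V) (t : ℕ) :
    0 < det3 (edgeNormal V t) (V t) (V (t + 1)) := by
  rw [det3_rotate, ← inner_cross_left, edgeNormal, NormedSpace.normalize, real_inner_smul_right,
    real_inner_self_eq_norm_sq]
  have := norm_pos_iff.mpr (h.cross_ne_zero t)
  positivity

lemma det3_vertex_edgeNormal_pos (h : IsLeftTurning V) (t : ℕ) :
    0 < det3 (V (t + 1)) (edgeNormal V t) (edgeNormal V (t + 1)) := by
  have hpos : 0 < det3 (V (t + 1)) (cross (V t) (V (t + 1))) (cross (V (t + 1)) (V (t + 2))) := by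
    rw [← inner_cross_left, inner_cross_cross, inner_cross_left, inner_cross_left, det3_self_right,
      real_inner_self_eq_norm_sq, h.norm_eq_one, one_pow, one_mul, mul_zero, sub_zero]
    exact h.det3_pos t
  simpa only [edgeNormal, normalize_eq_self_of_norm_eq_one (h.norm_eq_one _)] using
    det3_normalize_pos hpos

lemma inner_edgeNormal_succ (h : IsLeftTurning V) (t : ℕ) :
    ⟪edgeNormal V t, edgeNormal V (t + 1)⟫ = -cos (sangle (V t) (V (t + 1)) (V (t + 2))) := by
  rw [inner_eq_cos_angle_of_norm_eq_one (h.norm_edgeNormal t) (h.norm_edgeNormal _), edgeNormal,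
    edgeNormal, angle_normalize_left, angle_normalize_right,
    sangle_eq_pi_sub_angle_cross (h.norm_eq_one _), cos_pi_sub, neg_neg]

lemma map_edgeNormal_succ (hV : IsLeftTurning V) (hW : IsLeftTurning W) {R : E3 ≃ₗᵢ[ℝ] E3}
    (hR : LinearMap.det (R.toLinearEquiv : E3 →ₗ[ℝ] E3) = 1) {t : ℕ}
    (hangle : sangle (V t) (V (t + 1)) (V (t + 2)) = sangle (W t) (W (t + 1)) (W (t + 2)))
    (hnormal : R (edgeNormal V t) = edgeNormal W t) (hvertex : R (V (t + 1)) = W (t + 1)) :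
    R (edgeNormal V (t + 1)) = edgeNormal W (t + 1) := by
  refine rotation_map_eq hR hvertex hnormal (hV.det3_vertex_edgeNormal_pos t)
    (hW.det3_vertex_edgeNormal_pos t) ?_ ?_ ?_
  · rw [real_inner_comm, inner_edgeNormal_left, real_inner_comm, inner_edgeNormal_left]
  · rw [hV.inner_edgeNormal_succ, hW.inner_edgeNormal_succ, hangle]
  · rw [hV.norm_edgeNormal, hW.norm_edgeNormal]

lemma map_vertex_succ (hV : IsLeftTurning V) (hW : IsLeftTurning W) {R : E3 ≃ₗᵢ[ℝ] E3}
    (hR : LinearMap.det (R.toLinearEquiv : E3 →ₗ[ℝ] E3) = 1) {t : ℕ}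
    (hlen : sdist (V t) (V (t + 1)) = sdist (W t) (W (t + 1)))
    (hnormal : R (edgeNormal V t) = edgeNormal W t) (hvertex : R (V t) = W t) :
    R (V (t + 1)) = W (t + 1) := by
  refine rotation_map_eq hR hnormal hvertex (hV.det3_edgeNormal_edge_pos t)
    (hW.det3_edgeNormal_edge_pos t) ?_ ?_ ?_
  · rw [inner_edgeNormal_right, inner_edgeNormal_right]
  · rw [inner_eq_cos_sdist (hV.norm_eq_one _) (hV.norm_eq_one _), hlen,
      inner_eq_cos_sdist (hW.norm_eq_one _) (hW.norm_eq_one _)]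
  · rw [hV.norm_eq_one, hW.norm_eq_one]

lemma map_vertex_of_map_edgeNormal (hV : IsLeftTurning V) (hW : IsLeftTurning W)
    {R : E3 ≃ₗᵢ[ℝ] E3} (hR : LinearMap.det (R.toLinearEquiv : E3 →ₗ[ℝ] E3) = 1) {t : ℕ}
    (hnormal : R (edgeNormal V t) = edgeNormal W t)
    (hnormal' : R (edgeNormal V (t + 1)) = edgeNormal W (t + 1)) : R (V (t + 1)) = W (t + 1) := by
  refine rotation_map_eq hR hnormal hnormal'
    (det3_rotate (V (t + 1)) _ _ ▸ hV.det3_vertex_edgeNormal_pos t)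
    (det3_rotate (W (t + 1)) _ _ ▸ hW.det3_vertex_edgeNormal_pos t) ?_ ?_ ?_
  · rw [inner_edgeNormal_right, inner_edgeNormal_right]
  · rw [inner_edgeNormal_left, inner_edgeNormal_left]
  · rw [hV.norm_eq_one, hW.norm_eq_one]

lemma exists_rotation_map_edgeNormal (hV : IsLeftTurning V) (hW : IsLeftTurning W) {a b : ℕ}
    (hangle : ∀ t, sangle (V t) (V (t + 1)) (V (t + 2)) = sangle (W t) (W (t + 1)) (W (t + 2)))
    (hlen : ∀ t, a < t → t < b → sdist (V t) (V (t + 1)) = sdist (W t) (W (t + 1))) :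
    ∃ R : E3 ≃ₗᵢ[ℝ] E3, LinearMap.det (R.toLinearEquiv : E3 →ₗ[ℝ] E3) = 1 ∧
      ∀ t, a ≤ t → t ≤ b → R (edgeNormal V t) = edgeNormal W t := by
  obtain ⟨R, hR, hnormal, hvertex⟩ := exists_rotation_map_eq (hV.norm_edgeNormal a)
    (hV.norm_eq_one (a + 1)) (inner_edgeNormal_right V a) (hW.norm_edgeNormal a)
    (hW.norm_eq_one (a + 1)) (inner_edgeNormal_right W a)
  refine ⟨R, hR, fun t hat htb => ?_⟩
  suffices R (edgeNormal V t) = edgeNormal W t ∧ (t < b → R (V (t + 1)) = W (t + 1)) from this.1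
  induction t, hat using Nat.le_induction with
  | base => exact ⟨hnormal, fun _ => hvertex⟩
  | succ t hat ih =>
    obtain ⟨hnormal, hvertex⟩ := ih (by omega)
    have hvertex := hvertex (by omega)
    have hnormal := hV.map_edgeNormal_succ hW hR (hangle t) hnormal hvertex
    exact ⟨hnormal, fun htb' =>
      hV.map_vertex_succ hW hR (hlen (t + 1) (by omega) htb') hnormal hvertex⟩

lemma inner_edgeNormal_eq (hV : IsLeftTurning V) (hW : IsLeftTurning W) {a b : ℕ}
    (hangle : ∀ t, sangle (V t) (V (t + 1)) (V (t + 2)) = sangle (W t) (W (t + 1)) (W (t + 2)))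
    (hlen : ∀ t, a < t → t < b → sdist (V t) (V (t + 1)) = sdist (W t) (W (t + 1))) {i j : ℕ}
    (hi : i ∈ Set.Icc a b) (hj : j ∈ Set.Icc a b) :
    ⟪edgeNormal V i, edgeNormal V j⟫ = ⟪edgeNormal W i, edgeNormal W j⟫ := by
  obtain ⟨R, -, hmap⟩ := hV.exists_rotation_map_edgeNormal hW hangle hlen
  rw [← hmap i hi.1 hi.2, ← hmap j hj.1 hj.2, R.inner_map_map]

end IsLeftTurning

/-! ### Rigidity -/

namespace IsConvexCycle

variable {n : ℕ} {V W : ℕ → E3}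

lemma periodic_edgeNormal (h : IsConvexCycle n V) : Function.Periodic (edgeNormal V) n := by
  intro t
  rw [edgeNormal, add_right_comm, h.periodic, h.periodic, edgeNormal]

lemma det3_edgeNormal_pos (h : IsConvexCycle n V) {a b c : ℕ} (hab : a < b) (hbc : b < c)
    (hca : c < a + n) : 0 < det3 (edgeNormal V a) (edgeNormal V b) (edgeNormal V c) :=
  det3_normalize_pos (h.det3_cross_pos hab hbc hca)

lemma map_edgeNormal_of_lt_of_lt (hV : IsConvexCycle n V) (hW : IsConvexCycle n W)
    {R : E3 ≃ₗᵢ[ℝ] E3} (hR : LinearMap.det (R.toLinearEquiv : E3 →ₗ[ℝ] E3) = 1) {i j k : ℕ}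
    (hij : i < j) (hjk : j < k) (hki : k < i + n)
    (hi : R (edgeNormal V i) = edgeNormal W i) (hk : R (edgeNormal V k) = edgeNormal W k)
    (hinner_i : ⟪edgeNormal V i, edgeNormal V j⟫ = ⟪edgeNormal W i, edgeNormal W j⟫)
    (hinner_k : ⟪edgeNormal V k, edgeNormal V j⟫ = ⟪edgeNormal W k, edgeNormal W j⟫) :
    R (edgeNormal V j) = edgeNormal W j := by
  refine rotation_map_eq hR hk hi ?_ ?_ hinner_k hinner_i ?_
  · rw [det3_rotate]
    exact hV.det3_edgeNormal_pos hij hjk hki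
  · rw [det3_rotate]
    exact hW.det3_edgeNormal_pos hij hjk hki
  · rw [hV.norm_edgeNormal, hW.norm_edgeNormal]

lemma exists_rotation_map_edgeNormal (hV : IsConvexCycle n V) (hW : IsConvexCycle n W)
    (hangle : ∀ t, sangle (V t) (V (t + 1)) (V (t + 2)) = sangle (W t) (W (t + 1)) (W (t + 2)))
    {a b c : ℕ} (hab : a < b) (hbc : b < c) (hca : c < a + n)
    (hlen : ∀ t, a < t → t < a + n → t ≠ b → t ≠ c →
      sdist (V t) (V (t + 1)) = sdist (W t) (W (t + 1))) :
    ∃ R : E3 ≃ₗᵢ[ℝ] E3, LinearMap.det (R.toLinearEquiv : E3 →ₗ[ℝ] E3) = 1 ∧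
      ∀ t, a ≤ t → t ≤ a + n → R (edgeNormal V t) = edgeNormal W t := by
  obtain ⟨R, hR, hmap_ab⟩ := hV.toIsLeftTurning.exists_rotation_map_edgeNormal hW.toIsLeftTurning
    (a := a) (b := b) hangle fun t _ _ => hlen t (by omega) (by omega) (by omega) (by omega)
  have hinner_bc {i j : ℕ} := hV.inner_edgeNormal_eq hW.toIsLeftTurning (a := b) (b := c) (i := i)
    (j := j) hangle fun t _ _ => hlen t (by omega) (by omega) (by omega) (by omega)
  have hinner_ca {i j : ℕ} := hV.inner_edgeNormal_eq hW.toIsLeftTurning (a := c) (b := a + n)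
    (i := i) (j := j) hangle fun t _ _ => hlen t (by omega) (by omega) (by omega) (by omega)
  have hb := hmap_ab b hab.le le_rfl
  have ha : R (edgeNormal V (a + n)) = edgeNormal W (a + n) := by
    rw [hV.periodic_edgeNormal, hW.periodic_edgeNormal]
    exact hmap_ab a le_rfl hab.le
  have hc : R (edgeNormal V c) = edgeNormal W c :=
    hV.map_edgeNormal_of_lt_of_lt hW hR hbc hca (by omega) hb ha
      (hinner_bc ⟨le_rfl, hbc.le⟩ ⟨hbc.le, le_rfl⟩) (hinner_ca ⟨hca.le, le_rfl⟩ ⟨le_rfl, hca.le⟩)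
  refine ⟨R, hR, fun t hat hta => ?_⟩
  obtain htb | ⟨hbt, htc⟩ | rfl | ⟨hct, hta⟩ | rfl :
      t ≤ b ∨ (b < t ∧ t < c) ∨ t = c ∨ (c < t ∧ t < a + n) ∨ t = a + n := by omega
  · exact hmap_ab t hat htb
  · exact hV.map_edgeNormal_of_lt_of_lt hW hR hbt htc (by omega) hb hc
      (hinner_bc ⟨le_rfl, hbc.le⟩ ⟨hbt.le, htc.le⟩) (hinner_bc ⟨hbc.le, le_rfl⟩ ⟨hbt.le, htc.le⟩)
  · exact hc
  · exact hV.map_edgeNormal_of_lt_of_lt hW hR hct hta (by omega) hc ha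
      (hinner_ca ⟨le_rfl, hca.le⟩ ⟨hct.le, hta.le⟩) (hinner_ca ⟨hca.le, le_rfl⟩ ⟨hct.le, hta.le⟩)
  · exact ha

lemma exists_isometry_map_eq (hV : IsConvexCycle n V) (hW : IsConvexCycle n W)
    (hangle : ∀ t, sangle (V t) (V (t + 1)) (V (t + 2)) = sangle (W t) (W (t + 1)) (W (t + 2)))
    {a b c : ℕ} (hab : a < b) (hbc : b < c) (hca : c < a + n)
    (hlen : ∀ t, a < t → t < a + n → t ≠ b → t ≠ c →
      sdist (V t) (V (t + 1)) = sdist (W t) (W (t + 1))) :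
    ∃ R : E3 ≃ₗᵢ[ℝ] E3, ∀ t, a < t → t ≤ a + n → R (V t) = W t := by
  obtain ⟨R, hR, hmap⟩ := hV.exists_rotation_map_edgeNormal hW hangle hab hbc hca hlen
  refine ⟨R, fun t hat hta => ?_⟩
  obtain ⟨t, rfl⟩ := Nat.exists_eq_add_one.mpr (a.zero_le.trans_lt hat)
  exact hV.map_vertex_of_map_edgeNormal hW.toIsLeftTurning hR (hmap t (by omega) (by omega))
    (hmap (t + 1) (by omega) hta)

end IsConvexCycle

/-! ### Polygons as cycles -/

/-- The `n`-periodic sequence running through the vertices `v`, used to replace the cyclic order of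
`Fin n` by the order of `ℕ`. -/
def unroll {n : ℕ} [NeZero n] (v : Fin n → E3) (t : ℕ) : E3 := v (Fin.ofNat n t)

lemma unroll_val {n : ℕ} [NeZero n] (v : Fin n → E3) (i : Fin n) : unroll v i = v i := by
  rw [unroll, Fin.ofNat_val_eq_self]

lemma periodic_unroll {n : ℕ} [NeZero n] (v : Fin n → E3) : Function.Periodic (unroll v) n := by
  intro t
  simp [unroll, Fin.ofNat]

lemma finOfNat_add_one (n t : ℕ) [NeZero n] : Fin.ofNat n (t + 1) = Fin.ofNat n t + 1 := by
  ext
  simp [Fin.val_add]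

lemma finOfNat_succ_sub_one (n t : ℕ) [NeZero n] : Fin.ofNat n (t + 1) - 1 = Fin.ofNat n t := by
  rw [finOfNat_add_one, add_sub_cancel_right]

lemma finOfNat_ne_finOfNat {n i j : ℕ} [NeZero n] (hij : i < j) (hji : j < i + n) :
    Fin.ofNat n j ≠ Fin.ofNat n i := by
  intro h
  refine hij.ne' (Nat.mod_injOn_Ico i n ?_ ?_ (Fin.val_eq_of_eq h)) <;> rw [Finset.coe_Ico] <;>
    constructor <;> omega

lemma finOfNat_ne_of_ne_of_lt {n t : ℕ} [NeZero n] {i : Fin n} (hne : t ≠ i) (hlt : t < i + n) :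
    Fin.ofNat n t ≠ i := by
  rw [← Fin.ofNat_val_eq_self i]
  obtain hti | hit := lt_or_gt_of_ne hne
  · exact (finOfNat_ne_finOfNat hti (by omega)).symm
  · exact finOfNat_ne_finOfNat hit hlt

lemma StrictlyConvexSphPolygon.isConvexCycle {m : ℕ} {v : Fin (m + 3) → E3}
    (h : StrictlyConvexSphPolygon m v) : IsConvexCycle (m + 3) (unroll v) := by
  obtain ⟨hnorm, hturn, -, hdisj, u, -, hpos⟩ := h
  refine ⟨⟨fun t => hnorm _, fun t => ?_⟩, periodic_unroll v, fun {i j} hij hji => ?_,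
    u, fun t => hpos _ _ (left_mem_arcSeg (hnorm _) _)⟩
  · have hdet := hturn (Fin.ofNat _ (t + 1))
    rwa [finOfNat_succ_sub_one, ← finOfNat_add_one] at hdet
  · have hdisj := hdisj (Fin.ofNat _ i) (Fin.ofNat _ j)
    rw [← finOfNat_add_one, ← finOfNat_add_one] at hdisj
    exact hdisj (finOfNat_ne_finOfNat (by omega) (by omega))
      (finOfNat_ne_finOfNat (by omega) (by omega))
      (finOfNat_ne_finOfNat (by omega) (by omega)).symm

lemma exists_lt_lt_forall_mem_of_card_compl_eq_three {ι : Type*} [Fintype ι] [LinearOrder ι]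
    {S : Finset ι} (hS : Sᶜ.card = 3) :
    ∃ a b c, a < b ∧ b < c ∧ ∀ i, i ≠ a → i ≠ b → i ≠ c → i ∈ S := by
  let e := Sᶜ.orderEmbOfFin hS
  refine ⟨e 0, e 1, e 2, e.strictMono (by decide), e.strictMono (by decide), fun i ha hb hc => ?_⟩
  by_contra hi
  obtain ⟨j, rfl⟩ : i ∈ Set.range e := by
    rw [Finset.range_orderEmbOfFin]
    simpa using hi
  fin_cases j <;> contradiction

/-- A strictly-convex spherical polygon with `n = m + 3` edges is uniquely
determined, up to an isometry of the sphere, by all `n` of its interior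
angles together with any `n - 3` of its edge lengths. -/
theorem statement7 (m : ℕ) (v w : Fin (m + 3) → E3)
    (hv : StrictlyConvexSphPolygon m v) (hw : StrictlyConvexSphPolygon m w)
    (hang : ∀ i : Fin (m + 3),
      sangle (v (i - 1)) (v i) (v (i + 1)) = sangle (w (i - 1)) (w i) (w (i + 1)))
    (S : Finset (Fin (m + 3))) (hS : S.card = m)
    (hlen : ∀ i ∈ S, sdist (v i) (v (i + 1)) = sdist (w i) (w (i + 1))) :
    ∃ g : E3 ≃ₗᵢ[ℝ] E3, ∀ i, g (v i) = w i := by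
  obtain ⟨a, b, c, hab, hbc, hmem⟩ := exists_lt_lt_forall_mem_of_card_compl_eq_three
    (show Sᶜ.card = 3 by rw [Finset.card_compl, Fintype.card_fin, hS, Nat.add_sub_cancel_left])
  have hangle (t : ℕ) : sangle (unroll v t) (unroll v (t + 1)) (unroll v (t + 2)) =
      sangle (unroll w t) (unroll w (t + 1)) (unroll w (t + 2)) := by
    have hang := hang (Fin.ofNat _ (t + 1))
    rwa [finOfNat_succ_sub_one, ← finOfNat_add_one] at hang
  have hlength (t : ℕ) (hat : a < t) (hta : t < a + (m + 3)) (htb : t ≠ b) (htc : t ≠ c) :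
      sdist (unroll v t) (unroll v (t + 1)) = sdist (unroll w t) (unroll w (t + 1)) := by
    have hlen := hlen _ (hmem _ (finOfNat_ne_of_ne_of_lt hat.ne' hta)
      (finOfNat_ne_of_ne_of_lt htb (by omega)) (finOfNat_ne_of_ne_of_lt htc (by omega)))
    rwa [← finOfNat_add_one] at hlen
  obtain ⟨g, hg⟩ := hv.isConvexCycle.exists_isometry_map_eq hw.isConvexCycle hangle
    (Fin.lt_def.mp hab) (Fin.lt_def.mp hbc) (by omega) hlength
  refine ⟨g, fun i => ?_⟩
  rw [← unroll_val v, ← unroll_val w]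
  obtain hai | hia := lt_or_ge a i
  · exact hg i hai (by omega)
  · rw [← periodic_unroll v, ← periodic_unroll w]
    exact hg _ (by omega) (by omega)
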